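/- Let X be a compact topological space, Y an upward directed partially ordered set, and f : X × Y → ℝ ∪ {−∞, +∞} a function such that (i) for every y ∈ Y the map x ↦ f(x,y) is upper semicontinuous, and (ii) for every x ∈ X the map y ↦ f(x,y) is monotone decreasing. Then sup_{x∈X} inf_{y∈Y} f(x,y) = inf_{y∈Y} sup_{x∈X} f(x,y), and both suprema are attained (i.e., may be replaced by maxima). -/

import Mathlib

/-- **Minimax lemma.** Let `X` be a compact topological space, `Y` an upward directed
partially ordered set, and `f : X × Y → ℝ ∪ {−∞, +∞}` such that `x ↦ f x y` is upper
semicontinuous for every `y` and `y ↦ f x y` is monotone decreasing for every `x`.  Then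
`sup_x inf_y f x y = inf_y sup_x f x y`, and both suprema are attained. -/
theorem minimax_usc_antitone {X Y : Type*} [TopologicalSpace X] [CompactSpace X]
    [Nonempty X] [PartialOrder Y] [IsDirected Y (· ≤ ·)]
    (f : X → Y → EReal)
    (husc : ∀ y : Y, UpperSemicontinuous fun x => f x y)
    (hmono : ∀ x : X, Antitone (f x)) :
    ((⨆ x, ⨅ y, f x y) = ⨅ y, ⨆ x, f x y) ∧
    (∃ x₀, (⨅ y, f x₀ y) = ⨆ x, ⨅ y, f x y) ∧
    (∀ y, ∃ x₁, f x₁ y = ⨆ x, f x y) := by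
  have hatt : ∀ y, ∃ x₁, f x₁ y = ⨆ x, f x y := by
    intro y
    obtain ⟨a, -, ha⟩ := UpperSemicontinuousOn.exists_isMaxOn (s := Set.univ)
      Set.univ_nonempty isCompact_univ ((husc y).upperSemicontinuousOn Set.univ)
    exact ⟨a, le_antisymm (le_iSup (fun x => f x y) a)
      (iSup_le fun x => ha (Set.mem_univ x))⟩
  have hle : (⨆ x, ⨅ y, f x y) ≤ ⨅ y, ⨆ x, f x y := iSup_iInf_le_iInf_iSup f
  have hkey : ∃ x₀, (⨅ y, ⨆ x, f x y) ≤ ⨅ y, f x₀ y := by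
    rcases isEmpty_or_nonempty Y with hY | hY
    · exact ⟨Classical.arbitrary X, by simp⟩
    have hcl : ∀ y, IsClosed {x | (⨅ y, ⨆ x, f x y) ≤ f x y} := fun y =>
      (husc y).isClosed_preimage _
    obtain ⟨x₀, hx₀⟩ := IsCompact.nonempty_iInter_of_directed_nonempty_isCompact_isClosed
      (fun y => {x | (⨅ y, ⨆ x, f x y) ≤ f x y})
      (by
        intro a b
        obtain ⟨c, hac, hbc⟩ := directed_of (· ≤ ·) a b
        exact ⟨c, fun x hx => le_trans hx (hmono x hac), fun x hx => le_trans hx (hmono x hbc)⟩)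
      (by
        intro y
        obtain ⟨x, hx⟩ := hatt y
        exact ⟨x, le_trans (iInf_le (fun y => ⨆ x, f x y) y) hx.ge⟩)
      (fun y => (hcl y).isCompact) hcl
    exact ⟨x₀, le_iInf fun y => Set.mem_iInter.1 hx₀ y⟩
  obtain ⟨x₀, h⟩ := hkey
  have h2 : (⨅ y, f x₀ y) ≤ ⨆ x, ⨅ y, f x y := le_iSup (fun x => ⨅ y, f x y) x₀
  exact ⟨le_antisymm hle (h.trans h2), ⟨x₀, le_antisymm h2 (hle.trans h)⟩, hatt⟩
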